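/- Let (m, b, A) be an instance of 3-PARTITION and set N_C = 2mb and C = 8mb. Construct the instance of P|partition, M_r|ΣC_j with 2m machines and the following jobs: for each a ∈ A, a job of processing time a with its own unique resource whose allowed machine set is {1,…,m}; for each i ∈ {1,…,m}: N_C jobs of processing time C, all with resource i whose allowed machine set is {i, m+i}; one job of processing time b with resource i; and one job of processing time N_C²·C with its own unique resource whose allowed machine set is {m+i}. Let Z⁺ = mb + m·(N_C·b + (C + N_C·C)·N_C/2) + m·(b + N_C²·C) + 2mb. Then (m, b, A) is a yes-instance of 3-PARTITION if and only if the constructed scheduling instance has a feasible schedule with total completion time at most Z⁺. -/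

import Mathlib

/-- A non-preemptive schedule `(s, M)` for the instance with `m` machines,
processing times `p` and resources `r` is feasible if all start times are
nonnegative and the processing intervals of any two distinct jobs assigned to
the same machine, or having the same resource, are disjoint. -/
def Feasible {J R : Type} (m : ℕ) (p : J → ℝ) (r : J → R)
    (s : J → ℝ) (M : J → Fin m) : Prop :=
  (∀ j, 0 ≤ s j) ∧
  ∀ j j' : J, j ≠ j' → (M j = M j' ∨ r j = r j') →
    Disjoint (Set.Ico (s j) (s j + p j)) (Set.Ico (s j') (s j' + p j'))

/-- Feasibility for `P|partition, M_r|ΣC_j`: the schedule is feasible and every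
job is assigned to a machine allowed for its resource. -/
def FeasibleMr {J R : Type} (m : ℕ) (p : J → ℝ) (r : J → R)
    (allowed : R → Set (Fin m)) (s : J → ℝ) (M : J → Fin m) : Prop :=
  Feasible m p r s M ∧ ∀ j, M j ∈ allowed (r j)

/-- A 3-PARTITION instance `(m, b, a)` is a yes-instance: the `3m` integers can
be partitioned into `m` triples each summing to `b`. -/
def ThreePartitionYes (m b : ℕ) (a : Fin (3 * m) → ℕ) : Prop :=
  ∃ f : Fin (3 * m) → Fin m, ∀ i : Fin m,
    (Finset.univ.filter (fun k => f k = i)).card = 3 ∧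
    ∑ k ∈ Finset.univ.filter (fun k => f k = i), a k = b

/-- Jobs of the reduction: the `a`-jobs, the `C`-jobs (`N_C = 2mb` per
machine-index `i`), the release-date jobs and the `D`-jobs. -/
abbrev J11 (m b : ℕ) : Type :=
  Fin (3 * m) ⊕ (Fin m × Fin (2 * m * b)) ⊕ Fin m ⊕ Fin m

/-- Resources of the reduction: a unique resource for each `a`-job, one resource
`i` shared by the `C`-jobs and release-date job of index `i`, and a unique
resource for each `D`-job. -/
abbrev R11 (m : ℕ) : Type := Fin (3 * m) ⊕ Fin m ⊕ Fin m

/-- Processing times of the reduction, with `N_C = 2mb` and `C = 8mb`: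
the `a`-job of index `k` has processing time `a k`, each `C`-job has processing
time `C`, each release-date job has processing time `b`, and each `D`-job has
processing time `N_C² · C`. -/
def p11 (m b : ℕ) (a : Fin (3 * m) → ℕ) : J11 m b → ℝ
  | Sum.inl k => a k
  | Sum.inr (Sum.inl _) => 8 * m * b
  | Sum.inr (Sum.inr (Sum.inl _)) => b
  | Sum.inr (Sum.inr (Sum.inr _)) => (2 * m * b : ℕ) ^ 2 * (8 * m * b : ℕ)

/-- Resource assignment of the reduction. -/
def r11 (m b : ℕ) : J11 m b → R11 m
  | Sum.inl k => Sum.inl k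
  | Sum.inr (Sum.inl q) => Sum.inr (Sum.inl q.1)
  | Sum.inr (Sum.inr (Sum.inl i)) => Sum.inr (Sum.inl i)
  | Sum.inr (Sum.inr (Sum.inr i)) => Sum.inr (Sum.inr i)

/-- Allowed machines of the reduction (out of `2m` machines): resources of
`a`-jobs may use machines `0,…,m-1`; resource `i` (of the `C`-jobs and release
job `i`) may use machines `i` and `m+i`; the resource of `D`-job `i` may only
use machine `m+i`. -/
def allowed11 (m : ℕ) : R11 m → Set (Fin (2 * m))
  | Sum.inl _ => {x | (x : ℕ) < m}
  | Sum.inr (Sum.inl i) => {x | (x : ℕ) = (i : ℕ) ∨ (x : ℕ) = m + (i : ℕ)}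
  | Sum.inr (Sum.inr i) => {x | (x : ℕ) = m + (i : ℕ)}

/-- The threshold `Z⁺ = mb + m(N_C·b + (C + N_C·C)·N_C/2) + m(b + N_C²·C) + 2mb`
with `N_C = 2mb` and `C = 8mb`. -/
noncomputable def Zplus (m b : ℕ) : ℝ :=
  m * b +
    m * ((2 * m * b : ℕ) * b +
      ((8 * m * b : ℕ) + (2 * m * b : ℕ) * (8 * m * b : ℕ)) * (2 * m * b : ℕ) / 2) +
    m * (b + ((2 * m * b : ℕ) : ℝ) ^ 2 * (8 * m * b : ℕ)) + 2 * m * b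

/-!
Up to the constant `Z⁺ - 2mb`, the total completion time is a sum of nonnegative terms: the start
times of the `a`- and `D`-jobs, and for each resource `i` the excess of its release job and `C`-jobs
over the optimal sequence, in which the release job comes first. A schedule of cost at most `Z⁺`
therefore has only `2mb` units to spend on delays.

Given triples of sum `b`, each triple is processed on its own machine, in an order or in its
reverse, whichever is cheaper; the start times in a triple then total at most `b`. Starting the
`D`-jobs at `b` uses up the other `mb` units.

Conversely, two `a`-jobs share a machine, so one of them is delayed and the excess of every resource
is strictly below `2mb`. The budget does not allow a `C`-job on a machine with a `D`-job, nor an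
`a`-job after a `C`-job, so the `C`-jobs of resource `i` wait on machine `i` for all `a`-jobs there.
A load of at least `b + 1` would delay all `2mb` of them by a unit; hence every load is `b`. The
groups need not be triples, because `b/4 ≤ a ≤ b/2` allows equality: two halves and four quarters
of `b` are also possible groups. They are equally frequent, and trading one half for two quarters
turns a pair of such groups into triples.
-/

section NonOverlapping

open Finset

variable {ι 𝕜 : Type*}

/-- The jobs `j` and `k`, with start times `s` and processing times `p`, do not overlap in time:
one of them is completed before the other starts. For jobs of positive length this is disjointness
of the processing intervals. -/
def NonOverlapping [Add 𝕜] [LE 𝕜] (s p : ι → 𝕜) (j k : ι) : Prop :=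
  s j + p j ≤ s k ∨ s k + p k ≤ s j

lemma NonOverlapping.disjoint_Ico [Add 𝕜] [LinearOrder 𝕜] {s p : ι → 𝕜} {j k : ι}
    (h : NonOverlapping s p j k) :
    Disjoint (Set.Ico (s j) (s j + p j)) (Set.Ico (s k) (s k + p k)) := by
  rw [Set.Ico_disjoint_Ico, min_le_iff, le_max_iff, le_max_iff]
  exact h.imp Or.inr Or.inl

variable {s p : ι → 𝕜} {F : Finset ι}

section OrderedAddCommGroup

variable [AddCommGroup 𝕜] [LinearOrder 𝕜] [IsOrderedAddMonoid 𝕜]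

lemma nonOverlapping_of_disjoint_Ico {j k : ι} (hj : 0 < p j) (hk : 0 < p k)
    (h : Disjoint (Set.Ico (s j) (s j + p j)) (Set.Ico (s k) (s k + p k))) :
    NonOverlapping s p j k := by
  rw [Set.Ico_disjoint_Ico, min_le_iff, le_max_iff, le_max_iff] at h
  rcases h with (h | h) | (h | h)
  · exact absurd h (lt_add_of_pos_right _ hj).not_ge
  · exact Or.inl h
  · exact Or.inr h
  · exact absurd h (lt_add_of_pos_right _ hk).not_ge

lemma NonOverlapping.add_le_of_le {j k : ι} (h : NonOverlapping s p j k) (hk : 0 < p k)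
    (hjk : s j ≤ s k) : s j + p j ≤ s k :=
  h.resolve_right fun hkj ↦ (lt_add_of_pos_right _ hk).not_ge (hkj.trans hjk)

lemma add_sum_le_of_pairwise_nonOverlapping {T U : 𝕜} (hTU : T ≤ U) (hp : ∀ j ∈ F, 0 < p j)
    (hT : ∀ j ∈ F, T ≤ s j) (hU : ∀ j ∈ F, s j + p j ≤ U)
    (hseq : (F : Set ι).Pairwise (NonOverlapping s p)) : T + ∑ j ∈ F, p j ≤ U := by
  classical
  induction F using Finset.induction_on_max_value s generalizing U with
  | empty => simpa using hTU
  | insert j F hj hmax ih =>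
    simp only [forall_mem_insert, coe_insert] at hp hT hU hseq
    have hF_le_start : T + ∑ k ∈ F, p k ≤ s j := by
      refine ih hT.1 hp.2 hT.2 (fun k hk ↦ ?_) (hseq.mono (Set.subset_insert _ _))
      have hkj : k ≠ j := ne_of_mem_of_not_mem hk hj
      exact (hseq (Set.mem_insert_of_mem _ hk) (Set.mem_insert _ _) hkj).add_le_of_le hp.1
        (hmax k hk)
    calc T + ∑ k ∈ insert j F, p k = T + ∑ k ∈ F, p k + p j := by
          rw [sum_insert hj, add_comm (p j), add_assoc]
      _ ≤ s j + p j := by gcongr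
      _ ≤ U := hU.1

end OrderedAddCommGroup

variable [Field 𝕜] [LinearOrder 𝕜] [IsStrictOrderedRing 𝕜]

/-- The total completion time of `n` jobs of length `C` processed without idle time from time `T`
on. -/
def backToBackCost (n : ℕ) (T C : 𝕜) : 𝕜 := n * T + C * n * (n + 1) / 2

lemma sum_backToBack_completion (n : ℕ) (T C : 𝕜) :
    ∑ q : Fin n, (T + (q : ℕ) * C + C) = backToBackCost n T C := by
  unfold backToBackCost
  induction n with
  | zero => simp
  | succ n ih =>
    rw [Fin.sum_univ_castSucc]
    simp only [Fin.val_castSucc, Fin.val_last, ih]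
    push_cast
    ring

lemma backToBackCost_le_sum_completion {C T : 𝕜} (hC : 0 < C) (hT : ∀ j ∈ F, T ≤ s j)
    (hseq : (F : Set ι).Pairwise (NonOverlapping s fun _ ↦ C)) :
    backToBackCost #F T C ≤ ∑ j ∈ F, (s j + C) := by
  classical
  unfold backToBackCost
  induction F using Finset.induction_on_max_value s with
  | empty => simp
  | insert j F hj hmax ih =>
    simp only [forall_mem_insert, coe_insert] at hT hseq
    have hseqF := hseq.mono (Set.subset_insert j F)
    have hF_le_start : T + ∑ _k ∈ F, C ≤ s j := by
      refine add_sum_le_of_pairwise_nonOverlapping hT.1 (fun _ _ ↦ hC) hT.2 (fun k hk ↦ ?_) hseqF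
      have hkj : k ≠ j := ne_of_mem_of_not_mem hk hj
      exact (hseq (Set.mem_insert_of_mem _ hk) (Set.mem_insert _ _) hkj).add_le_of_le hC
        (hmax k hk)
    have hcostF := ih hT.2 hseqF
    rw [sum_const, nsmul_eq_mul] at hF_le_start
    rw [sum_insert hj, card_insert_of_notMem hj]
    push_cast
    linarith

/-- Shortest-processing-time rule: a job of length `d ≤ C` is best processed first. -/
lemma backToBackCost_le_sum_completion_add_start {C d t : 𝕜} (hC : 0 < C) (hdC : d ≤ C)
    (ht : 0 ≤ t) (hs : ∀ j ∈ F, 0 ≤ s j)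
    (hseq : (F : Set ι).Pairwise (NonOverlapping s fun _ ↦ C))
    (hseqd : ∀ j ∈ F, s j + C ≤ t ∨ t + d ≤ s j) :
    backToBackCost #F d C ≤ ∑ j ∈ F, (s j + C) + t := by
  classical
  set before := {j ∈ F | s j + C ≤ t} with hbefore
  set after := {j ∈ F | ¬ s j + C ≤ t} with hafter
  have hseq_before := hseq.mono (coe_subset.2 (filter_subset (fun j ↦ s j + C ≤ t) F))
  have hseq_after := hseq.mono (coe_subset.2 (filter_subset (fun j ↦ ¬ s j + C ≤ t) F))
  have hs_before : ∀ j ∈ before, 0 ≤ s j := fun j hj ↦ hs j (mem_of_mem_filter j hj)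
  have hs_after : ∀ j ∈ after, t + d ≤ s j := fun j hj ↦
    (hseqd j (mem_of_mem_filter j hj)).resolve_left (mem_filter.1 hj).2
  have hcost_before := backToBackCost_le_sum_completion hC hs_before hseq_before
  have hcost_after := backToBackCost_le_sum_completion hC hs_after hseq_after
  have hlength_before : 0 + ∑ _j ∈ before, C ≤ t :=
    add_sum_le_of_pairwise_nonOverlapping ht (fun _ _ ↦ hC) hs_before
      (fun j hj ↦ (mem_filter.1 hj).2) hseq_before
  rw [zero_add, sum_const, nsmul_eq_mul] at hlength_before
  have hcard : (#F : 𝕜) = #before + #after := by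
    exact_mod_cast (card_filter_add_card_filter_not (s := F) fun j ↦ s j + C ≤ t).symm
  have hdelay : (#after : 𝕜) * (#before * C) ≤ #after * t := by gcongr
  have hswap : (#before : 𝕜) * d ≤ #before * C := by gcongr
  rw [← sum_filter_add_sum_filter_not F fun j ↦ s j + C ≤ t]
  unfold backToBackCost at *
  rw [hcard]
  linarith

end NonOverlapping

section StartAlong

open Finset

variable {ι 𝕜 : Type*}

/-- The start times of the jobs in `F` when they are processed without idle time from time `0` on
in the order `r`. -/
def startAlong (r : ι → ι → Prop) [DecidableRel r] [AddCommMonoid 𝕜] (F : Finset ι)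
    (p : ι → 𝕜) (k : ι) : 𝕜 :=
  ∑ l ∈ F with r l k, p l

lemma startAlong_lt_add_startAlong_gt [LinearOrder ι] [AddCommGroup 𝕜] {p : ι → 𝕜}
    {F : Finset ι} {k : ι} (hk : k ∈ F) :
    startAlong (· < ·) F p k + startAlong (· > ·) F p k = ∑ l ∈ F, p l - p k := by
  have hcompl : {l ∈ F.erase k | ¬ l < k} = {l ∈ F | l > k} := by
    ext l; simp only [mem_filter, mem_erase]; grind
  have hlt : {l ∈ F.erase k | l < k} = {l ∈ F | l < k} := by
    ext l; simp only [mem_filter, mem_erase]; grind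
  rw [startAlong, startAlong, ← sum_erase_eq_sub hk, ← hcompl, ← hlt,
    sum_filter_add_sum_filter_not]

variable {p : ι → 𝕜} {F : Finset ι}

section OrderedAddCommMonoid

variable [AddCommMonoid 𝕜] [PartialOrder 𝕜] [IsOrderedAddMonoid 𝕜]
  (r : ι → ι → Prop) [DecidableRel r]

lemma startAlong_nonneg (hp : ∀ l ∈ F, 0 ≤ p l) (k : ι) : 0 ≤ startAlong r F p k :=
  sum_nonneg fun l hl ↦ hp l (mem_of_mem_filter l hl)

lemma startAlong_add_le_sum [Std.Irrefl r] (hp : ∀ l ∈ F, 0 ≤ p l) {k : ι} (hk : k ∈ F) :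
    startAlong r F p k + p k ≤ ∑ l ∈ F, p l := by
  classical
  have hk_notMem : k ∉ {l ∈ F | r l k} := by simp [irrefl_of r k]
  rw [startAlong, add_comm, ← sum_insert hk_notMem]
  exact sum_le_sum_of_subset_of_nonneg (insert_subset hk (filter_subset _ _))
    fun l hl _ ↦ hp l hl

lemma startAlong_add_le_startAlong [IsStrictOrder ι r] (hp : ∀ l ∈ F, 0 ≤ p l) {j k : ι}
    (hj : j ∈ F) (hjk : r j k) : startAlong r F p j + p j ≤ startAlong r F p k := by
  classical
  have hj_notMem : j ∉ {l ∈ F | r l j} := by simp [irrefl_of r j]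
  rw [startAlong, add_comm, ← sum_insert hj_notMem]
  refine sum_le_sum_of_subset_of_nonneg (insert_subset (by simp [hj, hjk]) ?_)
    fun l hl _ ↦ hp l (mem_of_mem_filter l hl)
  exact monotone_filter_right F fun l _ hlj ↦ trans_of r hlj hjk

lemma pairwise_nonOverlapping_startAlong [IsStrictTotalOrder ι r] (hp : ∀ l ∈ F, 0 ≤ p l) :
    (F : Set ι).Pairwise (NonOverlapping (startAlong r F p) p) := by
  intro j hj k hk hjk
  rcases trichotomous_of r j k with h | h | h
  · exact Or.inl (startAlong_add_le_startAlong r hp hj h)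
  · exact absurd h hjk
  · exact Or.inr (startAlong_add_le_startAlong r hp hk h)

end OrderedAddCommMonoid

variable [Field 𝕜] [LinearOrder 𝕜] [IsStrictOrderedRing 𝕜]

/-- An order and its reverse have average total start time `(#F - 1) / 2 * ∑ p`, so one of the two
does at least as well. -/
lemma exists_pairwise_nonOverlapping_sum_start_le [LinearOrder ι] (hp : ∀ k ∈ F, 0 ≤ p k) :
    ∃ t : ι → 𝕜, (∀ k, 0 ≤ t k) ∧ (∀ k ∈ F, t k + p k ≤ ∑ l ∈ F, p l) ∧
      (F : Set ι).Pairwise (NonOverlapping t p) ∧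
      ∑ k ∈ F, t k ≤ (#F - 1) / 2 * ∑ k ∈ F, p k := by
  have htotal : ∑ k ∈ F, startAlong (· < ·) F p k + ∑ k ∈ F, startAlong (· > ·) F p k =
      (#F - 1) * ∑ k ∈ F, p k := by
    rw [← sum_add_distrib, sum_congr rfl fun k hk ↦ startAlong_lt_add_startAlong_gt hk,
      sum_sub_distrib, sum_const, nsmul_eq_mul]
    ring
  rcases le_total (∑ k ∈ F, startAlong (· < ·) F p k) (∑ k ∈ F, startAlong (· > ·) F p k) with h | h
  · exact ⟨_, startAlong_nonneg (· < ·) hp, fun _ ↦ startAlong_add_le_sum (· < ·) hp,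
      pairwise_nonOverlapping_startAlong (· < ·) hp, by linarith⟩
  · exact ⟨_, startAlong_nonneg (· > ·) hp, fun _ ↦ startAlong_add_le_sum (· > ·) hp,
      pairwise_nonOverlapping_startAlong (· > ·) hp, by linarith⟩

lemma exists_fiberwise_nonOverlapping_sum_start_le {κ : Type*} [LinearOrder ι] [Fintype ι]
    [Fintype κ] [DecidableEq κ] {f : ι → κ} {n : ℕ} {b : 𝕜} (hp : ∀ k, 0 ≤ p k)
    (hcard : ∀ i, #{k | f k = i} = n) (hsum : ∀ i, ∑ k with f k = i, p k = b) :
    ∃ t : ι → 𝕜, (∀ k, 0 ≤ t k) ∧ (∀ k, t k + p k ≤ b) ∧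
      (∀ k k', k ≠ k' → f k = f k' → NonOverlapping t p k k') ∧
      ∑ k, t k ≤ Fintype.card κ * ((n - 1) / 2 * b) := by
  have hgroup (i : κ) := exists_pairwise_nonOverlapping_sum_start_le
    (F := univ.filter (f · = i)) fun k _ ↦ hp k
  simp only [hsum, hcard] at hgroup
  choose t ht hend hseq hcost using hgroup
  refine ⟨fun k ↦ t (f k) k, fun k ↦ ht _ k, fun k ↦ hend _ k (by simp), fun k k' hne hkk' ↦ ?_, ?_⟩
  · have h := hseq (f k) (by simp) (by simp [hkk']) hne
    simpa only [NonOverlapping, hkk'] using h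
  · calc ∑ k, t (f k) k = ∑ i, ∑ k with f k = i, t i k := by
          rw [← sum_fiberwise univ f]
          exact sum_congr rfl fun i _ ↦ sum_congr rfl fun k hk ↦ by rw [(mem_filter.1 hk).2]
      _ ≤ ∑ _i : κ, (n - 1) / 2 * b := sum_le_sum fun i _ ↦ hcost i
      _ = Fintype.card κ * ((n - 1) / 2 * b) := by rw [sum_const, card_univ, nsmul_eq_mul]

end StartAlong

section Regrouping

open Finset

lemma exists_lt_of_sum_eq_of_exists_ne {ι : Type*} {F : Finset ι} {c d : ι → ℕ}
    (h : ∑ i ∈ F, c i = ∑ i ∈ F, d i) (hne : ∃ i ∈ F, c i ≠ d i) : ∃ i ∈ F, c i < d i := by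
  by_contra! hle
  obtain ⟨i, hi, hcd⟩ := hne
  exact hcd ((sum_eq_sum_iff_of_le hle).1 h.symm i hi).symm

section Bounds

variable {κ : Type*} {F : Finset κ} {a : κ → ℕ} {b c : ℕ}

lemma le_card_of_sum_eq (hb : 0 < b) (hF : ∑ k ∈ F, a k = b) (ha : ∀ k ∈ F, c * a k ≤ b) :
    c ≤ #F := by
  have h := sum_le_card_nsmul F (fun k ↦ c * a k) b ha
  rw [← mul_sum, hF, smul_eq_mul] at h
  exact Nat.le_of_mul_le_mul_right h hb

lemma card_le_of_sum_eq (hb : 0 < b) (hF : ∑ k ∈ F, a k = b) (ha : ∀ k ∈ F, b ≤ c * a k) :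
    #F ≤ c := by
  have h := card_nsmul_le_sum F (fun k ↦ c * a k) b ha
  rw [← mul_sum, hF, smul_eq_mul] at h
  exact Nat.le_of_mul_le_mul_right h hb

lemma card_mul_eq_of_sum_eq_of_le (hF : ∑ k ∈ F, a k = b) (ha : ∀ k ∈ F, #F * a k ≤ b) :
    ∀ k ∈ F, #F * a k = b :=
  (sum_eq_sum_iff_of_le ha).1 (by rw [← mul_sum, hF, sum_const, smul_eq_mul])

lemma card_mul_eq_of_sum_eq_of_ge (hF : ∑ k ∈ F, a k = b) (ha : ∀ k ∈ F, b ≤ #F * a k) :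
    ∀ k ∈ F, #F * a k = b := fun k hk ↦
  ((sum_eq_sum_iff_of_le ha).1 (by rw [← mul_sum, hF, sum_const, smul_eq_mul]) k hk).symm

end Bounds

variable {κ ι : Type*}

section Exchange

variable [DecidableEq κ]

/-- Regroup the elements: `S` moves to group `j`, and `T` moves to group `i`. -/
def exchange (f : κ → ι) (S T : Finset κ) (i j : ι) (k : κ) : ι :=
  if k ∈ S then j else if k ∈ T then i else f k

variable {f : κ → ι} {S T : Finset κ} {i j : ι}

lemma exchange_eq_iff_of_ne {l : ι} (hS : ∀ k ∈ S, f k = i) (hT : ∀ k ∈ T, f k = j)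
    (hli : l ≠ i) (hlj : l ≠ j) (k : κ) : exchange f S T i j k = l ↔ f k = l := by
  grind [exchange]

variable [Fintype κ] [DecidableEq ι] {A : Type*} [AddCommMonoid A]

lemma sum_exchange_left (hij : i ≠ j) (hS : ∀ k ∈ S, f k = i) (hT : ∀ k ∈ T, f k = j)
    (w : κ → A) :
    ∑ k with exchange f S T i j k = i, w k + ∑ k ∈ S, w k =
      ∑ k with f k = i, w k + ∑ k ∈ T, w k := by
  rw [← univ_inter S, ← univ_inter T, ← sum_ite_mem univ S, ← sum_ite_mem univ T, sum_filter,
    sum_filter, ← sum_add_distrib, ← sum_add_distrib]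
  refine sum_congr rfl fun k _ ↦ ?_
  grind [exchange]

lemma sum_exchange_right (hij : i ≠ j) (hS : ∀ k ∈ S, f k = i) (hT : ∀ k ∈ T, f k = j)
    (w : κ → A) :
    ∑ k with exchange f S T i j k = j, w k + ∑ k ∈ T, w k =
      ∑ k with f k = j, w k + ∑ k ∈ S, w k := by
  rw [← univ_inter S, ← univ_inter T, ← sum_ite_mem univ S, ← sum_ite_mem univ T, sum_filter,
    sum_filter, ← sum_add_distrib, ← sum_add_distrib]
  refine sum_congr rfl fun k _ ↦ ?_
  grind [exchange]

end Exchange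

variable [Fintype κ] [Fintype ι] [DecidableEq ι] {a : κ → ℕ} {b : ℕ} {f : κ → ι}

lemma exists_card_fiber_eq_two_and_four (hb : 0 < b)
    (hbounds : ∀ k, b ≤ 4 * a k ∧ 2 * a k ≤ b)
    (hcard : Fintype.card κ = 3 * Fintype.card ι)
    (hf : ∀ i, ∑ k with f k = i, a k = b) (hbad : ∃ i, #{k | f k = i} ≠ 3) :
    (∃ i, #{k | f k = i} = 2) ∧ ∃ j, #{k | f k = j} = 4 := by
  have htotal : ∑ i, #{k | f k = i} = ∑ _i : ι, 3 := by
    rw [← card_eq_sum_card_fiberwise fun _ _ ↦ mem_coe.2 (mem_univ _), card_univ, hcard,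
      sum_const, card_univ, smul_eq_mul, mul_comm]
  obtain ⟨l, hl⟩ := hbad
  obtain ⟨i, -, hi⟩ := exists_lt_of_sum_eq_of_exists_ne htotal ⟨l, mem_univ l, hl⟩
  obtain ⟨j, -, hj⟩ := exists_lt_of_sum_eq_of_exists_ne htotal.symm ⟨l, mem_univ l, hl.symm⟩
  have hi2 : 2 ≤ #{k | f k = i} := le_card_of_sum_eq hb (hf i) fun k _ ↦ (hbounds k).2
  have hj4 : #{k | f k = j} ≤ 4 := card_le_of_sum_eq hb (hf j) fun k _ ↦ (hbounds k).1
  exact ⟨⟨i, by omega⟩, ⟨j, by omega⟩⟩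

/-- A group of two consists of halves of `b` and a group of four of quarters of `b`, so one half can
be traded for two quarters. -/
lemma exists_balanced_exchange (hb : 0 < b)
    (hbounds : ∀ k, b ≤ 4 * a k ∧ 2 * a k ≤ b)
    (hcard : Fintype.card κ = 3 * Fintype.card ι)
    (hf : ∀ i, ∑ k with f k = i, a k = b) (hbad : ∃ i, #{k | f k = i} ≠ 3) :
    ∃ (i j : ι) (S T : Finset κ), #{k | f k = i} = 2 ∧ #{k | f k = j} = 4 ∧
      (∀ k ∈ S, f k = i) ∧ (∀ k ∈ T, f k = j) ∧ #S = 1 ∧ #T = 2 ∧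
      ∑ k ∈ S, a k = ∑ k ∈ T, a k := by
  obtain ⟨⟨i, hi⟩, ⟨j, hj⟩⟩ := exists_card_fiber_eq_two_and_four hb hbounds hcard hf hbad
  obtain ⟨S, hSi, hS⟩ := exists_subset_card_eq (show 1 ≤ #{k | f k = i} by omega)
  obtain ⟨T, hTj, hT⟩ := exists_subset_card_eq (show 2 ≤ #{k | f k = j} by omega)
  have hhalf (k) (hk : k ∈ S) : 2 * a k = b := by
    rw [← hi]
    exact card_mul_eq_of_sum_eq_of_le (hf i) (fun l _ ↦ by rw [hi]; exact (hbounds l).2) k (hSi hk)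
  have hquarter (k) (hk : k ∈ T) : 4 * a k = b := by
    rw [← hj]
    exact card_mul_eq_of_sum_eq_of_ge (hf j) (fun l _ ↦ by rw [hj]; exact (hbounds l).1) k (hTj hk)
  have hSsum : 2 * ∑ k ∈ S, a k = b := by
    rw [mul_sum, sum_congr rfl hhalf, sum_const, hS, one_smul]
  have hTsum : 4 * ∑ k ∈ T, a k = 2 * b := by
    rw [mul_sum, sum_congr rfl hquarter, sum_const, hT, smul_eq_mul]
  exact ⟨i, j, S, T, hi, hj, fun k hk ↦ (mem_filter.1 (hSi hk)).2,
    fun k hk ↦ (mem_filter.1 (hTj hk)).2, hS, hT, by omega⟩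

lemma exists_fewer_fibers_card_ne_three (hb : 0 < b)
    (hbounds : ∀ k, b ≤ 4 * a k ∧ 2 * a k ≤ b)
    (hcard : Fintype.card κ = 3 * Fintype.card ι)
    (hf : ∀ i, ∑ k with f k = i, a k = b) (hbad : ∃ i, #{k | f k = i} ≠ 3) :
    ∃ g : κ → ι, (∀ i, ∑ k with g k = i, a k = b) ∧
      #{i | #{k | g k = i} ≠ 3} < #{i | #{k | f k = i} ≠ 3} := by
  classical
  obtain ⟨i, j, S, T, hi, hj, hSi, hTj, hS, hT, hST⟩ :=
    exists_balanced_exchange hb hbounds hcard hf hbad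
  have hij : i ≠ j := by rintro rfl; omega
  set g := exchange f S T i j with hg
  have hg_other (l : ι) (hli : l ≠ i) (hlj : l ≠ j) :
      univ.filter (g · = l) = univ.filter (f · = l) :=
    filter_congr fun k _ ↦ exchange_eq_iff_of_ne hSi hTj hli hlj k
  have hg_card_i : #{k | g k = i} = 3 := by
    have h := sum_exchange_left hij hSi hTj fun _ ↦ 1
    simp only [← card_eq_sum_ones, ← hg] at h
    omega
  have hg_card_j : #{k | g k = j} = 3 := by
    have h := sum_exchange_right hij hSi hTj fun _ ↦ 1
    simp only [← card_eq_sum_ones, ← hg] at h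
    omega
  refine ⟨g, fun l ↦ ?_, card_lt_card ((ssubset_iff_of_subset fun l ↦ ?_).2 ⟨i, ?_, ?_⟩)⟩
  · rcases eq_or_ne l i with rfl | hli
    · have h := sum_exchange_left hij hSi hTj a
      rwa [hST, hf, Nat.add_right_cancel_iff] at h
    rcases eq_or_ne l j with rfl | hlj
    · have h := sum_exchange_right hij hSi hTj a
      rwa [hST, hf, Nat.add_right_cancel_iff] at h
    rw [hg_other l hli hlj, hf]
  · simp only [mem_filter_univ]
    intro hl
    rwa [← hg_other l (by rintro rfl; exact hl hg_card_i) (by rintro rfl; exact hl hg_card_j)]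
  · simp [hi]
  · simp [hg_card_i]

lemma exists_fibers_card_eq_three (hb : 0 < b)
    (hbounds : ∀ k, b ≤ 4 * a k ∧ 2 * a k ≤ b)
    (hcard : Fintype.card κ = 3 * Fintype.card ι)
    (hf : ∀ i, ∑ k with f k = i, a k = b) :
    ∃ g : κ → ι, ∀ i, #{k | g k = i} = 3 ∧ ∑ k with g k = i, a k = b := by
  induction h : #{i | #{k | f k = i} ≠ 3} using Nat.strong_induction_on generalizing f with
  | _ n ih =>
    by_cases hbad : ∃ i, #{k | f k = i} ≠ 3
    · obtain ⟨g, hg, hlt⟩ := exists_fewer_fibers_card_ne_three hb hbounds hcard hf hbad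
      exact ih _ (h ▸ hlt) hg rfl
    · push Not at hbad
      exact ⟨f, fun i ↦ ⟨hbad i, hf i⟩⟩

end Regrouping

section Reduction

lemma Feasible.nonOverlapping {J R : Type} {m : ℕ} {p : J → ℝ} {r : J → R} {s : J → ℝ}
    {M : J → Fin m} (h : Feasible m p r s M) (hp : ∀ j, 0 < p j) {j j' : J} (hne : j ≠ j')
    (hconflict : M j = M j' ∨ r j = r j') : NonOverlapping s p j j' :=
  nonOverlapping_of_disjoint_Ico (hp j) (hp j') (h.2 j j' hne hconflict)

lemma FeasibleMr.start_nonneg {J R : Type} {m : ℕ} {p : J → ℝ} {r : J → R}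
    {allowed : R → Set (Fin m)} {s : J → ℝ} {M : J → Fin m} (h : FeasibleMr m p r allowed s M)
    (j : J) : 0 ≤ s j :=
  h.1.1 j

variable {m b : ℕ}

/-- The job of the `k`-th number of the 3-PARTITION instance. -/
abbrev aJob (k : Fin (3 * m)) : J11 m b := Sum.inl k

/-- The `q`-th job of length `C` with resource `i`. -/
abbrev cJob (i : Fin m) (q : Fin (2 * m * b)) : J11 m b := Sum.inr (Sum.inl (i, q))

/-- The job of length `b` with resource `i`; in a cheap schedule it keeps the `C`-jobs of the
resource from starting before time `b`. -/
abbrev releaseJob (i : Fin m) : J11 m b := Sum.inr (Sum.inr (Sum.inl i))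

/-- The long job that keeps the `C`-jobs with resource `i` off machine `m + i`. -/
abbrev dJob (i : Fin m) : J11 m b := Sum.inr (Sum.inr (Sum.inr i))

lemma sum_jobs (g : J11 m b → ℝ) :
    ∑ j, g j = ∑ k, g (aJob k) +
      (∑ i, ∑ q, g (cJob i q) + (∑ i, g (releaseJob i) + ∑ i, g (dJob i))) := by
  simp only [Fintype.sum_sum_type, Fintype.sum_prod_type]

lemma p11_dJob (a : Fin (3 * m) → ℕ) (i : Fin m) :
    p11 m b a (dJob i) = (2 * m * b) ^ 2 * (8 * m * b) := by
  simp [p11]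

lemma p11_pos {a : Fin (3 * m) → ℕ} (hb : 0 < b) (ha : ∀ k, 0 < a k) (j : J11 m b) :
    0 < p11 m b a j := by
  rcases j with k | ⟨i, _⟩ | _ | i
  · exact Nat.cast_pos.2 (ha k)
  · have hm := i.pos
    simp only [p11]
    positivity
  · exact Nat.cast_pos.2 hb
  · have hm := i.pos
    simp only [p11]
    positivity

/-- The amount by which the total completion time of the jobs with resource `i` exceeds its minimum,
attained by processing the release job first and then all `C`-jobs. -/
noncomputable def resourceExcess (s : J11 m b → ℝ) (i : Fin m) : ℝ :=
  ∑ q, (s (cJob i q) + 8 * m * b) + s (releaseJob i) -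
    backToBackCost (2 * m * b) (b : ℝ) (8 * m * b)

/-- The total completion time differs from `Z⁺ - 2mb`, its value if no job were ever delayed, by the
delays of the `a`- and `D`-jobs and the excesses of the resources. -/
lemma sum_completion_add_eq_Zplus_add {a : Fin (3 * m) → ℕ} (hsum : ∑ k, a k = m * b)
    (s : J11 m b → ℝ) :
    ∑ j, (s j + p11 m b a j) + 2 * m * b =
      Zplus m b +
        (∑ i, resourceExcess s i + ∑ i, s (dJob i) + ∑ k, s (aJob k)) := by
  have hsum' : ∑ k, (a k : ℝ) = m * b := by exact_mod_cast hsum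
  rw [sum_jobs]
  simp only [p11_dJob]
  simp only [p11, resourceExcess, Zplus, backToBackCost, Finset.sum_add_distrib,
    Finset.sum_sub_distrib, Finset.sum_const, Finset.card_univ, Fintype.card_fin, nsmul_eq_mul,
    hsum']
  push_cast
  ring

section Canonical

/-- The start times of the schedule built from a yes-instance, in which the `a`-jobs start at the
times `t`. -/
def canonicalStart (t : Fin (3 * m) → ℝ) : J11 m b → ℝ
  | Sum.inl k => t k
  | Sum.inr (Sum.inl (_, q)) => b + (q : ℕ) * (8 * m * b)
  | Sum.inr (Sum.inr (Sum.inl _)) => 0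
  | Sum.inr (Sum.inr (Sum.inr _)) => b

/-- The machine assignment of the schedule built from a yes-instance, in which the `a`-jobs are
grouped by `f`; the `C`-jobs with resource `i` share machine `i` with the `i`-th group. -/
def canonicalMachine (f : Fin (3 * m) → Fin m) : J11 m b → Fin (2 * m)
  | Sum.inl k => ⟨f k, by omega⟩
  | Sum.inr (Sum.inl (i, _)) => ⟨i, by omega⟩
  | Sum.inr (Sum.inr (Sum.inl i)) => ⟨m + i, by omega⟩
  | Sum.inr (Sum.inr (Sum.inr i)) => ⟨m + i, by omega⟩

variable {a : Fin (3 * m) → ℕ} {t : Fin (3 * m) → ℝ} {f : Fin (3 * m) → Fin m}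

lemma resourceExcess_canonicalStart (i : Fin m) :
    resourceExcess (canonicalStart t : J11 m b → ℝ) i = 0 := by
  simp only [resourceExcess, canonicalStart, sum_backToBack_completion]
  ring

lemma nonOverlapping_canonicalStart_cJob (i i' : Fin m) {q q' : Fin (2 * m * b)} (hq : q ≠ q') :
    NonOverlapping (canonicalStart t) (p11 m b a) (cJob i q) (cJob i' q') := by
  have hstep {x y : ℕ} (hxy : x < y) :
      (b + x * (8 * m * b) + 8 * m * b : ℝ) ≤ b + y * (8 * m * b) := by
    have : (b + x * (8 * m * b) + 8 * m * b : ℝ) = b + (x + 1 : ℕ) * (8 * m * b) := by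
      push_cast; ring
    rw [this]
    gcongr
    exact hxy
  exact (lt_or_gt_of_ne hq).imp hstep hstep

lemma nonOverlapping_canonicalStart (hend : ∀ k, t k + a k ≤ b)
    (hseq : ∀ k k', k ≠ k' → f k = f k' → NonOverlapping t (fun l ↦ (a l : ℝ)) k k')
    {j j' : J11 m b} (hne : j ≠ j')
    (hconflict : canonicalMachine f j = canonicalMachine f j' ∨ r11 m b j = r11 m b j') :
    NonOverlapping (canonicalStart t) (p11 m b a) j j' := by
  have hC (q : ℕ) : (b : ℝ) ≤ b + q * (8 * m * b) := le_add_of_nonneg_right (by positivity)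
  have hrelease : (0 + b : ℝ) ≤ b := (zero_add _).le
  rcases j with k | ⟨i, q⟩ | i | i <;> rcases j' with k' | ⟨i', q'⟩ | i' | i' <;>
    simp only [canonicalMachine, r11, ne_eq, Sum.inl.injEq, Sum.inr.injEq,
      reduceCtorEq, or_false, Prod.mk.injEq, not_false_eq_true, Fin.ext_iff] at hne hconflict <;>
    try omega
  · exact hseq k k' (by omega) (by omega)
  · exact Or.inl ((hend k).trans (hC q'))
  · exact Or.inr ((hend k').trans (hC q))
  · exact nonOverlapping_canonicalStart_cJob i i' (by omega)
  · exact Or.inr (hrelease.trans (hC q))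
  · exact Or.inl (hrelease.trans (hC q'))
  · exact Or.inl hrelease
  · exact Or.inr hrelease

lemma feasibleMr_canonical (ht : ∀ k, 0 ≤ t k) (hend : ∀ k, t k + a k ≤ b)
    (hseq : ∀ k k', k ≠ k' → f k = f k' → NonOverlapping t (fun l ↦ (a l : ℝ)) k k') :
    FeasibleMr (2 * m) (p11 m b a) (r11 m b) (allowed11 m) (canonicalStart t)
      (canonicalMachine f) := by
  refine ⟨⟨?_, fun j j' hne hconflict ↦
    (nonOverlapping_canonicalStart hend hseq hne hconflict).disjoint_Ico⟩, ?_⟩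
  · rintro (k | _ | _ | _) <;> simp only [canonicalStart]
    · exact ht k
    all_goals positivity
  · rintro (k | _ | _ | _) <;> simp [canonicalMachine, r11, allowed11]

lemma sum_completion_canonicalStart_le (hsum : ∑ k, a k = m * b) (ht : ∑ k, t k ≤ m * b) :
    ∑ j, (canonicalStart t j + p11 m b a j) ≤ Zplus m b := by
  have hcost := sum_completion_add_eq_Zplus_add hsum (canonicalStart t)
  simp only [resourceExcess_canonicalStart, canonicalStart, Finset.sum_const_zero, Finset.sum_const,
    Finset.card_univ, Fintype.card_fin, nsmul_eq_mul] at hcost ⊢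
  linarith

end Canonical

lemma ThreePartitionYes.exists_schedule {a : Fin (3 * m) → ℕ} (h : ThreePartitionYes m b a) :
    ∃ (s : J11 m b → ℝ) (M : J11 m b → Fin (2 * m)),
      FeasibleMr (2 * m) (p11 m b a) (r11 m b) (allowed11 m) s M ∧
      ∑ j, (s j + p11 m b a j) ≤ Zplus m b := by
  obtain ⟨f, hf⟩ := h
  have hsum : ∑ k, a k = m * b := by
    rw [← Finset.sum_fiberwise Finset.univ f, Finset.sum_congr rfl fun i _ ↦ (hf i).2]
    simp
  have hsum_fiber (i : Fin m) : ∑ k with f k = i, (a k : ℝ) = b := by exact_mod_cast (hf i).2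
  obtain ⟨t, ht, hend, hseq, hcost⟩ := exists_fiberwise_nonOverlapping_sum_start_le
    (fun k ↦ (Nat.cast_nonneg (a k) : (0 : ℝ) ≤ a k)) (fun i ↦ (hf i).1) hsum_fiber
  exact ⟨canonicalStart t, canonicalMachine f, feasibleMr_canonical ht hend hseq,
    sum_completion_canonicalStart_le hsum (hcost.trans_eq (by norm_num))⟩

section CheapSchedule

variable {a : Fin (3 * m) → ℕ} {s : J11 m b → ℝ} {M : J11 m b → Fin (2 * m)}

lemma pairwise_nonOverlapping_cJob
    (h : FeasibleMr (2 * m) (p11 m b a) (r11 m b) (allowed11 m) s M) (hb : 0 < b)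
    (ha : ∀ k, 0 < a k) (i : Fin m) (S : Set (Fin (2 * m * b))) :
    S.Pairwise (NonOverlapping (fun q ↦ s (cJob i q)) fun _ ↦ 8 * m * b) :=
  fun _ _ _ _ hq ↦ h.1.nonOverlapping (p11_pos hb ha) (by simpa using hq) (Or.inr rfl)

lemma resourceExcess_nonneg
    (h : FeasibleMr (2 * m) (p11 m b a) (r11 m b) (allowed11 m) s M) (hb : 0 < b)
    (ha : ∀ k, 0 < a k) (i : Fin m) : 0 ≤ resourceExcess s i := by
  have hm : (1 : ℝ) ≤ m := by exact_mod_cast i.pos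
  have hb' : (0 : ℝ) < b := by exact_mod_cast hb
  have hbC : (b : ℝ) ≤ 8 * m * b := by nlinarith
  have hcost := backToBackCost_le_sum_completion_add_start (F := Finset.univ) (by positivity) hbC
    (h.start_nonneg (releaseJob i)) (fun q _ ↦ h.start_nonneg (cJob i q))
    (pairwise_nonOverlapping_cJob h hb ha i _)
    fun q _ ↦ h.1.nonOverlapping (p11_pos hb ha) (by simp) (Or.inr rfl)
  rw [Finset.card_univ, Fintype.card_fin] at hcost
  exact sub_nonneg.2 hcost

lemma mul_sub_le_resourceExcess
    (h : FeasibleMr (2 * m) (p11 m b a) (r11 m b) (allowed11 m) s M) (hb : 0 < b)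
    (ha : ∀ k, 0 < a k) {i : Fin m} {T : ℝ} (hT : ∀ q, T ≤ s (cJob i q)) :
    2 * m * b * (T - b) ≤ resourceExcess s i := by
  have hm := i.pos
  have hcost := backToBackCost_le_sum_completion (F := Finset.univ) (by positivity)
    (fun q _ ↦ hT q) (pairwise_nonOverlapping_cJob h hb ha i _)
  have hrelease := h.start_nonneg (releaseJob i)
  rw [Finset.card_univ, Fintype.card_fin] at hcost
  unfold resourceExcess
  unfold backToBackCost at *
  push_cast at *
  linarith

/-- The machine of an `a`-job, as the index of a group of the 3-PARTITION instance. -/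
def aJobGroup (h : FeasibleMr (2 * m) (p11 m b a) (r11 m b) (allowed11 m) s M)
    (k : Fin (3 * m)) : Fin m :=
  ⟨M (aJob k), h.2 (aJob k)⟩

lemma nonOverlapping_aJob_of_aJobGroup_eq
    (h : FeasibleMr (2 * m) (p11 m b a) (r11 m b) (allowed11 m) s M) (hb : 0 < b)
    (ha : ∀ k, 0 < a k) {k k' : Fin (3 * m)} (hne : k ≠ k')
    (hgroup : aJobGroup h k = aJobGroup h k') :
    NonOverlapping (fun k ↦ s (aJob k)) (fun k ↦ (a k : ℝ)) k k' :=
  h.1.nonOverlapping (p11_pos hb ha) (j := aJob k) (j' := aJob k') (by simpa using hne)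
    (Or.inl (Fin.ext (Fin.mk.inj hgroup)))

/-- Two of the `3m` jobs share one of the `m` machines. -/
lemma sum_start_aJob_pos
    (h : FeasibleMr (2 * m) (p11 m b a) (r11 m b) (allowed11 m) s M) (hm : 0 < m) (hb : 0 < b)
    (ha : ∀ k, 0 < a k) : 0 < ∑ k, s (aJob k) := by
  obtain ⟨k, k', hne, hgroup⟩ :=
    Fintype.exists_ne_map_eq_of_card_lt (aJobGroup h) (by simp only [Fintype.card_fin]; omega)
  have hpos (l : Fin (3 * m)) : (0 : ℝ) < a l := Nat.cast_pos.2 (ha l)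
  have hs (l : Fin (3 * m)) : 0 ≤ s (aJob l) := h.start_nonneg _
  refine Finset.sum_pos' (fun l _ ↦ hs l) ?_
  rcases nonOverlapping_aJob_of_aJobGroup_eq h hb ha hne hgroup with hkk' | hkk'
  · exact ⟨k', Finset.mem_univ _, by linarith [hs k, hpos k]⟩
  · exact ⟨k, Finset.mem_univ _, by linarith [hs k', hpos k']⟩

lemma resourceExcess_lt_and_start_lt_of_cost_le
    (h : FeasibleMr (2 * m) (p11 m b a) (r11 m b) (allowed11 m) s M) (hm : 0 < m) (hb : 0 < b)
    (ha : ∀ k, 0 < a k) (hsum : ∑ k, a k = m * b)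
    (hcost : ∑ j, (s j + p11 m b a j) ≤ Zplus m b) :
    (∀ i, resourceExcess s i < 2 * m * b) ∧ (∀ i, s (dJob i) < 2 * m * b) ∧
      ∀ k, s (aJob k) ≤ 2 * m * b := by
  have htotal := sum_completion_add_eq_Zplus_add hsum s
  have ha_pos := sum_start_aJob_pos h hm hb ha
  have hexcess : ∀ i ∈ Finset.univ, 0 ≤ resourceExcess s i :=
    fun i _ ↦ resourceExcess_nonneg h hb ha i
  have hd : ∀ i ∈ Finset.univ, 0 ≤ s (dJob i) := fun i _ ↦ h.start_nonneg _
  have hexcess_sum := Finset.sum_nonneg hexcess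
  have hd_sum := Finset.sum_nonneg hd
  refine ⟨fun i ↦ ?_, fun i ↦ ?_, fun k ↦ ?_⟩
  · have := Finset.single_le_sum hexcess (Finset.mem_univ i)
    linarith
  · have := Finset.single_le_sum hd (Finset.mem_univ i)
    linarith
  · have := Finset.single_le_sum (fun l _ ↦ h.start_nonneg (aJob l)) (Finset.mem_univ k)
    linarith

lemma start_cJob_lt_of_resourceExcess_lt
    (h : FeasibleMr (2 * m) (p11 m b a) (r11 m b) (allowed11 m) s M) {i : Fin m}
    (hexcess : resourceExcess s i < 2 * m * b) (q : Fin (2 * m * b)) :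
    s (cJob i q) < (2 * m * b) ^ 2 * (8 * m * b) := by
  have hrelease := h.start_nonneg (releaseJob i)
  have hterm : s (cJob i q) + 8 * m * b ≤ ∑ q, (s (cJob i q) + 8 * m * b) :=
    Finset.single_le_sum (f := fun q ↦ s (cJob i q) + 8 * m * b)
      (fun q _ ↦ add_nonneg (h.start_nonneg _) (by positivity)) (Finset.mem_univ q)
  have hmb : 0 < m * b := by
    have := q.pos
    rw [mul_assoc] at this
    omega
  have hb_le : (b : ℝ) ≤ m * b := by exact_mod_cast Nat.le_mul_of_pos_left b i.pos
  unfold resourceExcess backToBackCost at hexcess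
  push_cast at hexcess
  obtain ⟨x, hx⟩ : ∃ x : ℝ, x = m * b := ⟨_, rfl⟩
  have hx1 : 1 ≤ x := by rw [hx]; exact_mod_cast hmb
  simp only [mul_assoc, ← hx] at *
  have hx2 : x * b ≤ x ^ 2 := by nlinarith
  have hx3 : x ^ 2 ≤ x ^ 3 := pow_le_pow_right₀ hx1 (by norm_num)
  linarith [sq_nonneg x]

/-- Machine `m + i` is blocked: a `C`-job would delay its `D`-job or wait for it. -/
lemma machine_cJob_eq
    (h : FeasibleMr (2 * m) (p11 m b a) (r11 m b) (allowed11 m) s M) (hb : 0 < b)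
    (ha : ∀ k, 0 < a k) {i : Fin m} (hexcess : resourceExcess s i < 2 * m * b)
    (hd : s (dJob i) < 2 * m * b) (q : Fin (2 * m * b)) :
    (M (cJob i q) : ℕ) = i := by
  have hallowed : (M (cJob i q) : ℕ) = i ∨ (M (cJob i q) : ℕ) = m + i := h.2 (cJob i q)
  have hmachine_d : (M (dJob i) : ℕ) = m + i := h.2 (dJob i)
  refine hallowed.resolve_right fun hblocked ↦ ?_
  have hseq := h.1.nonOverlapping (p11_pos hb ha) (j := cJob i q) (j' := dJob i) (by simp)
    (Or.inl (Fin.ext (hblocked.trans hmachine_d.symm)))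
  have hc_nonneg := h.start_nonneg (cJob i q)
  have hd_nonneg := h.start_nonneg (dJob i)
  rcases hseq with hc_first | hd_first
  · simp only [p11] at hc_first
    linarith
  · have hc_lt := start_cJob_lt_of_resourceExcess_lt h hexcess q
    rw [p11_dJob] at hd_first
    linarith

lemma aJob_completion_le_start_cJob
    (h : FeasibleMr (2 * m) (p11 m b a) (r11 m b) (allowed11 m) s M) (hb : 0 < b)
    (ha : ∀ k, 0 < a k) {k : Fin (3 * m)} {q : Fin (2 * m * b)}
    (hmachine : (M (cJob (aJobGroup h k) q) : ℕ) = aJobGroup h k)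
    (hk : s (aJob k) ≤ 2 * m * b) :
    s (aJob k) + a k ≤ s (cJob (aJobGroup h k) q) := by
  have hm := (aJobGroup h k).pos
  have hmb : (0 : ℝ) < m * b := by positivity
  refine (h.1.nonOverlapping (p11_pos hb ha) (j := aJob k) (by simp)
    (Or.inl (Fin.ext hmachine.symm))).resolve_right fun hc_first ↦ ?_
  have hc_nonneg := h.start_nonneg (cJob (aJobGroup h k) q)
  simp only [p11] at hc_first
  linarith

lemma sum_aJobGroup_le
    (h : FeasibleMr (2 * m) (p11 m b a) (r11 m b) (allowed11 m) s M) (hb : 0 < b)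
    (ha : ∀ k, 0 < a k) {i : Fin m} (hexcess : resourceExcess s i < 2 * m * b)
    (hd : s (dJob i) < 2 * m * b) (hstart : ∀ k, s (aJob k) ≤ 2 * m * b) :
    ∑ k with aJobGroup h k = i, a k ≤ b := by
  have hload (q : Fin (2 * m * b)) :
      ∑ k with aJobGroup h k = i, (a k : ℝ) ≤ s (cJob i q) := by
    rw [← zero_add (∑ k with aJobGroup h k = i, (a k : ℝ))]
    refine add_sum_le_of_pairwise_nonOverlapping (h.start_nonneg _)
      (fun k _ ↦ Nat.cast_pos.2 (ha k)) (fun k _ ↦ h.start_nonneg (aJob k)) (fun k hk ↦ ?_)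
      fun k hk k' hk' hne ↦ nonOverlapping_aJob_of_aJobGroup_eq h hb ha hne ?_
    · obtain rfl : aJobGroup h k = i := (Finset.mem_filter.1 hk).2
      exact aJob_completion_le_start_cJob h hb ha (machine_cJob_eq h hb ha hexcess hd q) (hstart k)
    · exact (Finset.mem_filter.1 hk).2.trans (Finset.mem_filter.1 hk').2.symm
  have hdelay := (mul_sub_le_resourceExcess h hb ha hload).trans_lt hexcess
  have hm := i.pos
  have hlt : ∑ k with aJobGroup h k = i, (a k : ℝ) - b < 1 :=
    (mul_lt_iff_lt_one_right (by positivity)).1 hdelay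
  rw [sub_lt_iff_lt_add'] at hlt
  exact Nat.lt_succ_iff.1 (by exact_mod_cast hlt)

lemma sum_aJobGroup_eq
    (h : FeasibleMr (2 * m) (p11 m b a) (r11 m b) (allowed11 m) s M) (hb : 0 < b)
    (ha : ∀ k, 0 < a k) (hsum : ∑ k, a k = m * b)
    (hcost : ∑ j, (s j + p11 m b a j) ≤ Zplus m b) (i : Fin m) :
    ∑ k with aJobGroup h k = i, a k = b := by
  obtain ⟨hexcess, hd, hstart⟩ :=
    resourceExcess_lt_and_start_lt_of_cost_le h i.pos hb ha hsum hcost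
  have hle : ∀ i ∈ Finset.univ, ∑ k with aJobGroup h k = i, a k ≤ b :=
    fun i _ ↦ sum_aJobGroup_le h hb ha (hexcess i) (hd i) hstart
  refine (Finset.sum_eq_sum_iff_of_le hle).1 ?_ i (Finset.mem_univ i)
  rw [Finset.sum_fiberwise, hsum, Finset.sum_const, Finset.card_univ, Fintype.card_fin, smul_eq_mul]

end CheapSchedule

end Reduction

/-- `P|partition, M_r|ΣC_j` is NP-hard: `(m, b, a)` is a yes-instance of
3-PARTITION if and only if the constructed scheduling instance on `2m` machines
has a feasible schedule of total completion time at most `Z⁺`. -/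
theorem threePartition_iff_schedule_Mr (m b : ℕ) (hm : 0 < m) (hb : 0 < b)
    (a : Fin (3 * m) → ℕ) (ha : ∀ k, 0 < a k)
    (hbounds : ∀ k, b ≤ 4 * a k ∧ 2 * a k ≤ b)
    (hsum : ∑ k, a k = m * b) :
    ThreePartitionYes m b a ↔
      ∃ (s : J11 m b → ℝ) (M : J11 m b → Fin (2 * m)),
        FeasibleMr (2 * m) (p11 m b a) (r11 m b) (allowed11 m) s M ∧
        ∑ j, (s j + p11 m b a j) ≤ Zplus m b := by
  refine ⟨ThreePartitionYes.exists_schedule, fun ⟨s, M, hfeasible, hcost⟩ ↦ ?_⟩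
  exact exists_fibers_card_eq_three hb hbounds (by simp)
    (sum_aJobGroup_eq hfeasible hb ha hsum hcost)
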